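/- There exists an absolute constant C_E > 0 with the following property. Let n ≥ 1 be an integer, t₀ ∈ ℝ, and let a, M : [t₀,∞) → ℝ be continuously differentiable with a(t) > 0, ȧ(t) > 0, M(t) > 0 and Ṁ(t) ≤ 0 for all t. Let g : [t₀,∞) × ℝⁿ → ℝ be continuous with, on every compact time interval, spatial support in a fixed compact set, and let u be a twice continuously differentiable solution of u_tt − a(t)^{−2} Δu + M(t)² u = g with the same support property. Then for every t > t₀: ‖u‖_{X(t)} ≤ C_E ( ‖u_t(t₀,·)‖_{L²(ℝⁿ)} + a(t₀)^{−1} ‖∇u(t₀,·)‖_{L²(ℝⁿ)} + M(t₀) ‖u(t₀,·)‖_{L²(ℝⁿ)} + ∫_{t₀}^{t} ‖g(τ,·)‖_{L²(ℝⁿ)} dτ ). -/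

import Mathlib

open MeasureTheory

noncomputable section

/-- The flat Laplace operator `Δf = Σᵢ ∂²f/∂xᵢ²` on `ℝⁿ`. -/
def lap {n : ℕ} (f : EuclideanSpace ℝ (Fin n) → ℝ)
    (x : EuclideanSpace ℝ (Fin n)) : ℝ :=
  ∑ i : Fin n,
    fderiv ℝ (fun y => fderiv ℝ f y (EuclideanSpace.single i 1)) x
      (EuclideanSpace.single i 1)

/-- The `X(T)`-norm of `u` over the time interval `[t₀, T]`:
`sup ‖∂ₜu‖ + sup ‖a⁻¹∇u‖ + sup ‖M u‖ + (∬ ȧ a⁻³ |∇u|²)^{1/2}`. -/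
def Xnorm {n : ℕ} (t₀ T : ℝ) (a M : ℝ → ℝ)
    (u : ℝ → EuclideanSpace ℝ (Fin n) → ℝ) : ℝ :=
  (⨆ τ : Set.Icc t₀ T,
      Real.sqrt (∫ x, (deriv (fun r => u r x) (τ : ℝ)) ^ 2))
  + (⨆ τ : Set.Icc t₀ T,
      (a (τ : ℝ))⁻¹ * Real.sqrt (∫ x, ‖fderiv ℝ (fun y => u (τ : ℝ) y) x‖ ^ 2))
  + (⨆ τ : Set.Icc t₀ T,
      M (τ : ℝ) * Real.sqrt (∫ x, (u (τ : ℝ) x) ^ 2))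
  + Real.sqrt (∫ τ in t₀..T, ∫ x,
      deriv a τ * ((a τ) ^ 3)⁻¹ * ‖fderiv ℝ (fun y => u τ y) x‖ ^ 2)

open Set

/-- An integrated form of Grönwall's inequality for `F' ≤ 2 √F γ - 2 D`. -/
lemma sqrt_le_and_integral_le_of_deriv_le {t₀ t : ℝ} (ht : t₀ < t) {F F' D γ : ℝ → ℝ}
    (hF : ContinuousOn F (Icc t₀ t)) (hF' : ContinuousOn F' (Icc t₀ t))
    (hD : ContinuousOn D (Icc t₀ t)) (hγ : ContinuousOn γ (Icc t₀ t))
    (hder : ∀ s ∈ Ioo t₀ t, HasDerivAt F (F' s) s)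
    (hle : ∀ s ∈ Icc t₀ t, F' s ≤ 2 * (√(F s) * γ s) - 2 * D s)
    (hF0 : ∀ s ∈ Icc t₀ t, 0 ≤ F s) (hD0 : ∀ s ∈ Icc t₀ t, 0 ≤ D s)
    (hγ0 : ∀ s ∈ Icc t₀ t, 0 ≤ γ s) :
    (∀ s ∈ Icc t₀ t, √(F s) ≤ √(F t₀) + 2 * ∫ τ in t₀..t, γ τ) ∧
      ∫ τ in t₀..t, D τ ≤ (√(F t₀) + 2 * ∫ τ in t₀..t, γ τ) ^ 2 := by
  obtain ⟨r, hr, hmax⟩ := isCompact_Icc.exists_isMaxOn ⟨t₀, left_mem_Icc.2 ht.le⟩ hF.sqrt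
  set m := √(F r) with hm
  have hmax' : ∀ s ∈ Icc t₀ t, √(F s) ≤ m := fun s hs => hmax hs
  set G := ∫ τ in t₀..t, γ τ with hG
  have hG0 : 0 ≤ G := intervalIntegral.integral_nonneg ht.le hγ0
  have hm0 : 0 ≤ m := Real.sqrt_nonneg _
  have key : ∀ s ∈ Icc t₀ t, F s + 2 * ∫ τ in t₀..s, D τ ≤ F t₀ + 2 * m * G := by
    intro s hs
    have hsub : Icc t₀ s ⊆ Icc t₀ t := Icc_subset_Icc_right hs.2
    have hγi := (hγ.mono hsub).intervalIntegrable_of_Icc (μ := volume) hs.1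
    have hDi := (hD.mono hsub).intervalIntegrable_of_Icc (μ := volume) hs.1
    have hF'i := (hF'.mono hsub).intervalIntegrable_of_Icc (μ := volume) hs.1
    have h1 := intervalIntegral.integral_eq_sub_of_hasDerivAt_of_le hs.1 (hF.mono hsub)
      (fun x hx => hder x ⟨hx.1, hx.2.trans_le hs.2⟩) hF'i
    have h2 : ∫ τ in t₀..s, F' τ ≤ ∫ τ in t₀..s, (2 * m * γ τ - 2 * D τ) := by
      refine intervalIntegral.integral_mono_on hs.1 hF'i
        ((hγi.const_mul _).sub (hDi.const_mul _)) fun x hx => (hle x (hsub hx)).trans ?_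
      have := mul_le_mul_of_nonneg_right (hmax' x (hsub hx)) (hγ0 x (hsub hx))
      linarith
    rw [intervalIntegral.integral_sub (hγi.const_mul _) (hDi.const_mul _),
      intervalIntegral.integral_const_mul, intervalIntegral.integral_const_mul] at h2
    have h3 : ∫ τ in t₀..s, γ τ ≤ G := by
      refine intervalIntegral.integral_mono_interval le_rfl hs.1 hs.2 ?_
        (hγ.intervalIntegrable_of_Icc ht.le)
      exact (ae_restrict_iff' measurableSet_Ioc).2
        (Filter.Eventually.of_forall fun x hx => hγ0 x (Ioc_subset_Icc_self hx))
    have h4 := mul_le_mul_of_nonneg_left h3 hm0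
    linarith
  have hDnn : ∀ s ∈ Icc t₀ t, 0 ≤ ∫ τ in t₀..s, D τ := fun s hs =>
    intervalIntegral.integral_nonneg hs.1 fun x hx => hD0 x ⟨hx.1, hx.2.trans hs.2⟩
  have ht₀ : t₀ ∈ Icc t₀ t := left_mem_Icc.2 ht.le
  have hsq : √(F t₀) ^ 2 = F t₀ := Real.sq_sqrt (hF0 _ ht₀)
  have hmsq : m ^ 2 = F r := Real.sq_sqrt (hF0 _ hr)
  have hs0 : √(F t₀) ≤ m := hmax' _ ht₀
  have hs00 : 0 ≤ √(F t₀) := Real.sqrt_nonneg _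
  have hmR : m ≤ √(F t₀) + 2 * G := by
    have h5 := key r hr
    have h6 := hDnn r hr
    by_contra! hcon
    nlinarith
  refine ⟨fun s hs => (hmax' s hs).trans hmR, ?_⟩
  have h7 := key t (right_mem_Icc.2 ht.le)
  have h8 := hF0 t (right_mem_Icc.2 ht.le)
  nlinarith [mul_le_mul_of_nonneg_right hmR hG0, mul_nonneg hs00 hG0, sq_nonneg (√(F t₀))]

/-- The Cauchy–Schwarz inequality for real square-integrable functions. -/
lemma integral_mul_le_sqrt_mul_sqrt {α : Type*} [MeasurableSpace α] {μ : Measure α} {f g : α → ℝ}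
    (hf : Integrable (fun x => f x ^ 2) μ) (hg : Integrable (fun x => g x ^ 2) μ)
    (hfg : Integrable (fun x => f x * g x) μ) :
    ∫ x, f x * g x ∂μ ≤ √(∫ x, f x ^ 2 ∂μ) * √(∫ x, g x ^ 2 ∂μ) := by
  have h : ∀ c : ℝ, 0 ≤ (∫ x, f x ^ 2 ∂μ) * (c * c) + (2 * ∫ x, f x * g x ∂μ) * c
      + ∫ x, g x ^ 2 ∂μ := by
    intro c
    have h1 : ∫ x, (c * f x + g x) ^ 2 ∂μ = (∫ x, f x ^ 2 ∂μ) * (c * c)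
        + (2 * ∫ x, f x * g x ∂μ) * c + ∫ x, g x ^ 2 ∂μ := by
      have h2 : ∀ x, (c * f x + g x) ^ 2 = c * c * f x ^ 2 + 2 * c * (f x * g x) + g x ^ 2 :=
        fun x => by ring
      simp_rw [h2]
      have h3 : Integrable (fun x => c * c * f x ^ 2 + 2 * c * (f x * g x)) μ :=
        (hf.const_mul _).add (hfg.const_mul _)
      rw [integral_add h3 hg,
        integral_add (hf.const_mul _) (hfg.const_mul _), integral_const_mul, integral_const_mul]
      ring
    rw [← h1]
    exact integral_nonneg fun x => sq_nonneg _
  have hd := discrim_le_zero h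
  rw [discrim] at hd
  rw [← Real.sqrt_mul (integral_nonneg fun x => sq_nonneg _)]
  exact Real.le_sqrt_of_sq_le (by linarith)

section Strip

lemma fderiv_eq_zero_of_eq_zero_on_strip {E : Type*} [NormedAddCommGroup E] [NormedSpace ℝ E]
    {f : ℝ × E → ℝ} (hf : Differentiable ℝ f) {t₀ T : ℝ} (hT : t₀ < T) {K : Set E} (hK : IsCompact K)
    (h0 : ∀ t ∈ Icc t₀ T, ∀ x ∉ K, f (t, x) = 0) :
    ∀ t ∈ Icc t₀ T, ∀ x ∉ K, fderiv ℝ f (t, x) = 0 := by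
  intro t ht x hx
  have hmem : (t, x) ∈ Icc t₀ T ×ˢ Kᶜ := ⟨ht, hx⟩
  have hu : UniqueDiffWithinAt ℝ (Icc t₀ T ×ˢ Kᶜ) (t, x) :=
    (uniqueDiffOn_Icc hT).prod hK.isClosed.isOpen_compl.uniqueDiffOn _ hmem
  rw [← (hf (t, x)).fderivWithin hu,
    fderivWithin_congr (f := fun _ => (0 : ℝ)) (fun y hy => h0 y.1 hy.1 y.2 hy.2) (h0 t ht x hx)]
  simp

variable {E : Type*} [NormedAddCommGroup E] [MeasurableSpace E] [BorelSpace E] {μ : Measure E}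
  [IsFiniteMeasureOnCompacts μ]

lemma integrable_slice {f : ℝ × E → ℝ} (hf : Continuous f) {K : Set E} (hK : IsCompact K) {t : ℝ}
    (h0 : ∀ x ∉ K, f (t, x) = 0) : Integrable (fun x => f (t, x)) μ :=
  (hf.comp (Continuous.prodMk_right t)).integrable_of_hasCompactSupport
    (HasCompactSupport.intro hK h0)

lemma hasDerivAt_integral_slice {f f' : ℝ × E → ℝ} (hf : Continuous f) (hf' : Continuous f')
    (hd : ∀ t x, HasDerivAt (fun s => f (s, x)) (f' (t, x)) t) {t₀ T : ℝ} {K : Set E}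
    (hK : IsCompact K) (h0 : ∀ t ∈ Icc t₀ T, ∀ x ∉ K, f (t, x) = 0)
    (h0' : ∀ t ∈ Icc t₀ T, ∀ x ∉ K, f' (t, x) = 0) {t : ℝ} (ht : t ∈ Ioo t₀ T) :
    HasDerivAt (fun s => ∫ x, f (s, x) ∂μ) (∫ x, f' (t, x) ∂μ) t := by
  obtain ⟨C, hC⟩ := ((isCompact_Icc (a := t₀) (b := T)).prod hK).exists_bound_of_continuousOn
    hf'.continuousOn
  have hnhds : Ioo t₀ T ∈ nhds t := Ioo_mem_nhds ht.1 ht.2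
  refine (hasDerivAt_integral_of_dominated_loc_of_deriv_le (F := fun s x => f (s, x))
    (F' := fun s x => f' (s, x)) (bound := K.indicator fun _ => C) hnhds ?_
    (integrable_slice hf hK (h0 t (Ioo_subset_Icc_self ht)))
    (integrable_slice hf' hK (h0' t (Ioo_subset_Icc_self ht))).aestronglyMeasurable ?_ ?_ ?_).2
  · filter_upwards [hnhds] with s hs
    exact (integrable_slice hf hK (h0 s (Ioo_subset_Icc_self hs))).aestronglyMeasurable
  · refine Filter.Eventually.of_forall fun x s hs => ?_
    by_cases hx : x ∈ K
    · simpa [hx] using hC (s, x) ⟨Ioo_subset_Icc_self hs, hx⟩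
    · simp [hx, h0' s (Ioo_subset_Icc_self hs) x hx]
  · exact (integrable_indicator_iff hK.measurableSet).2 (integrableOn_const hK.measure_ne_top)
  · exact Filter.Eventually.of_forall fun x s _ => hd s x

lemma continuousOn_integral_slice {f : ℝ × E → ℝ} (hf : Continuous f) {K : Set E}
    (hK : IsCompact K) {s : Set ℝ} (h0 : ∀ t ∈ s, ∀ x ∉ K, f (t, x) = 0) :
    ContinuousOn (fun t => ∫ x, f (t, x) ∂μ) s :=
  continuousOn_integral_of_compact_support hK (f := fun t x => f (t, x)) hf.continuousOn
    fun t x ht hx => h0 t ht x hx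

end Strip

section PartialDerivatives

variable {E : Type*} [NormedAddCommGroup E] [NormedSpace ℝ E] {f : ℝ × E → ℝ} {t : ℝ} {x : E}

lemma hasDerivAt_slice (hf : DifferentiableAt ℝ f (t, x)) :
    HasDerivAt (fun s => f (s, x)) (fderiv ℝ f (t, x) (1, 0)) t := by
  have h : HasDerivAt (fun s : ℝ => (s, x)) ((1 : ℝ), (0 : E)) t :=
    (hasDerivAt_id t).prodMk (hasDerivAt_const t x)
  exact HasFDerivAt.comp_hasDerivAt (l := f) (f := fun s : ℝ => (s, x)) t hf.hasFDerivAt h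

lemma hasFDerivAt_slice (hf : DifferentiableAt ℝ f (t, x)) :
    HasFDerivAt (fun y => f (t, y))
      ((fderiv ℝ f (t, x)).comp (ContinuousLinearMap.inr ℝ ℝ E)) x :=
  HasFDerivAt.comp (g := f) (f := fun y : E => (t, y)) x hf.hasFDerivAt
    (hasFDerivAt_prodMk_right t x)

lemma fderiv_slice (hf : DifferentiableAt ℝ f (t, x)) (v : E) :
    fderiv ℝ (fun y => f (t, y)) x v = fderiv ℝ f (t, x) (0, v) := by
  rw [(hasFDerivAt_slice hf).fderiv]
  simp

lemma contDiff_fderiv_apply_const {F : Type*} [NormedAddCommGroup F] [NormedSpace ℝ F] {f : F → ℝ}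
    (hf : ContDiff ℝ 2 f) (v : F) : ContDiff ℝ 1 fun p => fderiv ℝ f p v :=
  (hf.fderiv_right (m := 1) (by norm_num)).clm_apply contDiff_const

lemma fderiv_fderiv_apply_comm {F : Type*} [NormedAddCommGroup F] [NormedSpace ℝ F] {f : F → ℝ}
    (hf : ContDiff ℝ 2 f) (p v w : F) :
    fderiv ℝ (fun q => fderiv ℝ f q v) p w = fderiv ℝ (fun q => fderiv ℝ f q w) p v := by
  have hd : DifferentiableAt ℝ (fderiv ℝ f) p :=
    (hf.fderiv_right (m := 1) (by norm_num)).differentiable one_ne_zero p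
  have h : ∀ v w, fderiv ℝ (fun q => fderiv ℝ f q v) p w = fderiv ℝ (fderiv ℝ f) p w v := by
    intro v w
    rw [fderiv_clm_apply hd (differentiableAt_const v)]
    simp
  rw [h, h]
  exact (hf.contDiffAt.isSymmSndFDerivAt (by simp)) w v

end PartialDerivatives

lemma integral_slice_mul_fderiv {n : ℕ} {f h : ℝ × EuclideanSpace ℝ (Fin n) → ℝ}
    (hf : ContDiff ℝ 1 f) (hh : ContDiff ℝ 1 h) {K : Set (EuclideanSpace ℝ (Fin n))}
    (hK : IsCompact K) {t : ℝ} (hf0 : ∀ x ∉ K, f (t, x) = 0) (hh0 : ∀ x ∉ K, h (t, x) = 0)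
    (v : EuclideanSpace ℝ (Fin n)) :
    ∫ x, f (t, x) * fderiv ℝ h (t, x) (0, v) = -∫ x, h (t, x) * fderiv ℝ f (t, x) (0, v) := by
  have hfd := hf.differentiable one_ne_zero
  have hhd := hh.differentiable one_ne_zero
  have cf : Continuous fun p => fderiv ℝ f p (0, v) :=
    (hf.continuous_fderiv one_ne_zero).clm_apply continuous_const
  have ch : Continuous fun p => fderiv ℝ h p (0, v) :=
    (hh.continuous_fderiv one_ne_zero).clm_apply continuous_const
  have key := integral_mul_fderiv_eq_neg_fderiv_mul_of_integrable (μ := volume) (v := v)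
    (f := fun x => f (t, x)) (g := fun x => h (t, x)) ?_ ?_ ?_
    (fun x _ => (hasFDerivAt_slice (hfd _)).differentiableAt)
    (fun x _ => (hasFDerivAt_slice (hhd _)).differentiableAt)
  · simp_rw [fderiv_slice (hfd _), fderiv_slice (hhd _)] at key
    simpa only [mul_comm] using key
  · simp_rw [fderiv_slice (hfd _)]
    exact integrable_slice (cf.mul hh.continuous) hK fun x hx => by simp [hh0 x hx]
  · simp_rw [fderiv_slice (hhd _)]
    exact integrable_slice (hf.continuous.mul ch) hK fun x hx => by simp [hf0 x hx]
  · exact integrable_slice (hf.continuous.mul hh.continuous) hK fun x hx => by simp [hf0 x hx]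

/-- The energy estimate for `u_tt - a⁻² Δu + M² u = g`, in terms of the derivatives of `u` on
space-time. -/
lemma energy_estimate {n : ℕ} {t₀ T : ℝ} (hT : t₀ < T) {a M : ℝ → ℝ} (ha : ContDiff ℝ 1 a)
    (hM : ContDiff ℝ 1 M) (ha0 : ∀ t ∈ Ici t₀, 0 < a t) (ha' : ∀ t ∈ Ici t₀, 0 < deriv a t)
    (hM0 : ∀ t ∈ Ici t₀, 0 < M t) (hM' : ∀ t ∈ Ici t₀, deriv M t ≤ 0)
    {U g : ℝ × EuclideanSpace ℝ (Fin n) → ℝ} (hU : ContDiff ℝ 2 U) (hg : Continuous g)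
    {K : Set (EuclideanSpace ℝ (Fin n))} (hK : IsCompact K)
    (hU0 : ∀ t ∈ Icc t₀ T, ∀ x ∉ K, U (t, x) = 0) (hg0 : ∀ t ∈ Icc t₀ T, ∀ x ∉ K, g (t, x) = 0)
    (hpde : ∀ t ∈ Icc t₀ T, ∀ x,
      fderiv ℝ (fun p => fderiv ℝ U p (1, 0)) (t, x) (1, 0)
        - (a t ^ 2)⁻¹ * ∑ i, fderiv ℝ (fun p => fderiv ℝ U p (0, EuclideanSpace.single i 1)) (t, x)
            (0, EuclideanSpace.single i 1)
        + M t ^ 2 * U (t, x) = g (t, x))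
    {F B : ℝ → ℝ}
    (hB : ∀ t, B t = ∫ x, ∑ i, fderiv ℝ U (t, x) (0, EuclideanSpace.single i 1) ^ 2)
    (hF : ∀ t, F t = (∫ x, fderiv ℝ U (t, x) (1, 0) ^ 2) + (a t ^ 2)⁻¹ * B t
      + M t ^ 2 * ∫ x, U (t, x) ^ 2) :
    (∀ t ∈ Icc t₀ T, √(F t) ≤ √(F t₀) + 2 * ∫ τ in t₀..T, √(∫ x, g (τ, x) ^ 2)) ∧
      ∫ τ in t₀..T, deriv a τ * (a τ ^ 3)⁻¹ * B τ
        ≤ (√(F t₀) + 2 * ∫ τ in t₀..T, √(∫ x, g (τ, x) ^ 2)) ^ 2 := by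
  set Ut : ℝ × EuclideanSpace ℝ (Fin n) → ℝ := fun p => fderiv ℝ U p (1, 0) with hUt
  set Ux : Fin n → ℝ × EuclideanSpace ℝ (Fin n) → ℝ :=
    fun i p => fderiv ℝ U p (0, EuclideanSpace.single i 1) with hUx
  have hUtC : ContDiff ℝ 1 Ut := contDiff_fderiv_apply_const hU _
  have hUxC : ∀ i, ContDiff ℝ 1 (Ux i) := fun i => contDiff_fderiv_apply_const hU _
  have hUd : Differentiable ℝ U := hU.differentiable two_ne_zero
  have hUtd := hUtC.differentiable one_ne_zero
  have hUxd := fun i => (hUxC i).differentiable one_ne_zero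
  have hsymm : ∀ i p, fderiv ℝ (Ux i) p (1, 0)
      = fderiv ℝ Ut p (0, EuclideanSpace.single i 1) :=
    fun i p => fderiv_fderiv_apply_comm hU p _ _
  have hdU0 := fderiv_eq_zero_of_eq_zero_on_strip hUd hT hK hU0
  have hUt0 : ∀ t ∈ Icc t₀ T, ∀ x ∉ K, Ut (t, x) = 0 := fun t ht x hx => by
    simp [hUt, hdU0 t ht x hx]
  have hUx0 : ∀ i, ∀ t ∈ Icc t₀ T, ∀ x ∉ K, Ux i (t, x) = 0 := fun i t ht x hx => by
    simp [hUx, hdU0 t ht x hx]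
  have cU := hU.continuous
  have cUt := hUtC.continuous
  have cUx := fun i => (hUxC i).continuous
  have cdUt : ∀ v, Continuous fun p => fderiv ℝ Ut p v := fun v =>
    (hUtC.continuous_fderiv one_ne_zero).clm_apply continuous_const
  have cdUx : ∀ i v, Continuous fun p => fderiv ℝ (Ux i) p v := fun i v =>
    ((hUxC i).continuous_fderiv one_ne_zero).clm_apply continuous_const
  have hAc : ContinuousOn (fun t => ∫ x, Ut (t, x) ^ 2) (Icc t₀ T) :=
    continuousOn_integral_slice (f := fun p => Ut p ^ 2) (cUt.pow 2) hK
      fun t ht x hx => by simp [hUt0 t ht x hx]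
  have hBc : ContinuousOn B (Icc t₀ T) := by
    simp_rw [funext hB]
    exact continuousOn_integral_slice (f := fun p => ∑ i, Ux i p ^ 2)
      (continuous_finsetSum _ fun i _ => (cUx i).pow 2) hK
      fun t ht x hx => Finset.sum_eq_zero fun i _ => by simp [hUx0 i t ht x hx]
  have hCc : ContinuousOn (fun t => ∫ x, U (t, x) ^ 2) (Icc t₀ T) :=
    continuousOn_integral_slice (f := fun p => U p ^ 2) (cU.pow 2) hK
      fun t ht x hx => by simp [hU0 t ht x hx]
  have hgc : ContinuousOn (fun t => √(∫ x, g (t, x) ^ 2)) (Icc t₀ T) :=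
    (continuousOn_integral_slice (f := fun p => g p ^ 2) (hg.pow 2) hK
      fun t ht x hx => by simp [hg0 t ht x hx]).sqrt
  have hWc : ContinuousOn (fun t => ∫ x, Ut (t, x) * g (t, x)) (Icc t₀ T) :=
    continuousOn_integral_slice (f := fun p => Ut p * g p) (cUt.mul hg) hK
      fun t ht x hx => by simp [hg0 t ht x hx]
  have hane : ∀ t ∈ Icc t₀ T, a t ≠ 0 := fun t ht => (ha0 t ht.1).ne'
  have hac := ha.continuous.continuousOn (s := Icc t₀ T)
  have hMc := hM.continuous.continuousOn (s := Icc t₀ T)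
  have hadc := (ha.continuous_deriv le_rfl).continuousOn (s := Icc t₀ T)
  have hMdc := (hM.continuous_deriv le_rfl).continuousOn (s := Icc t₀ T)
  have hFc : ContinuousOn F (Icc t₀ T) := by
    simp_rw [funext hF]
    exact (hAc.add (((hac.pow 2).inv₀ fun t ht => pow_ne_zero 2 (hane t ht)).mul hBc)).add
      ((hMc.pow 2).mul hCc)
  have hDc : ContinuousOn (fun τ => deriv a τ * (a τ ^ 3)⁻¹ * B τ) (Icc t₀ T) :=
    (hadc.mul ((hac.pow 3).inv₀ fun t ht => pow_ne_zero 3 (hane t ht))).mul hBc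
  have hB0 : ∀ t, 0 ≤ B t := fun t => by
    rw [hB]
    exact integral_nonneg fun x => Finset.sum_nonneg fun i _ => sq_nonneg _
  have hA0 : ∀ t, 0 ≤ ∫ x, Ut (t, x) ^ 2 := fun t => integral_nonneg fun x => sq_nonneg _
  have hC0 : ∀ t, 0 ≤ ∫ x, U (t, x) ^ 2 := fun t => integral_nonneg fun x => sq_nonneg _
  refine sqrt_le_and_integral_le_of_deriv_le hT
    (F' := fun t => 2 * (∫ x, Ut (t, x) * g (t, x)) - 2 * (deriv a t * (a t ^ 3)⁻¹ * B t)
      + 2 * (M t * deriv M t) * ∫ x, U (t, x) ^ 2) hFc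
    (((hWc.const_mul 2).sub (hDc.const_mul 2)).add
      (((hMc.mul hMdc).const_mul 2).mul hCc)) hDc hgc ?_ ?_ ?_ ?_ ?_
  · intro t ht
    have ht' := Ioo_subset_Icc_self ht
    have dA : HasDerivAt (fun s => ∫ x, Ut (s, x) ^ 2)
        (∫ x, 2 * (Ut (t, x) * fderiv ℝ Ut (t, x) (1, 0))) t := by
      refine hasDerivAt_integral_slice (f := fun p => Ut p ^ 2)
        (f' := fun p => 2 * (Ut p * fderiv ℝ Ut p (1, 0))) (cUt.pow 2)
        (continuous_const.mul (cUt.mul (cdUt _))) (fun s x => ?_) hK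
        (fun s hs x hx => by simp [hUt0 s hs x hx]) (fun s hs x hx => by simp [hUt0 s hs x hx]) ht
      refine ((hasDerivAt_slice (hUtd (s, x))).pow 2).congr_deriv ?_
      norm_num
      ring
    have dC : HasDerivAt (fun s => ∫ x, U (s, x) ^ 2)
        (∫ x, 2 * (Ut (t, x) * U (t, x))) t := by
      refine hasDerivAt_integral_slice (f := fun p => U p ^ 2)
        (f' := fun p => 2 * (Ut p * U p)) (cU.pow 2)
        (continuous_const.mul (cUt.mul cU)) (fun s x => ?_) hK
        (fun s hs x hx => by simp [hU0 s hs x hx]) (fun s hs x hx => by simp [hU0 s hs x hx]) ht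
      refine ((hasDerivAt_slice (hUd (s, x))).pow 2).congr_deriv ?_
      simp only [hUt]
      norm_num
      ring
    have dB : HasDerivAt B (∫ x, ∑ i, 2 * (Ux i (t, x) * fderiv ℝ (Ux i) (t, x) (1, 0))) t := by
      rw [funext hB]
      refine hasDerivAt_integral_slice (f := fun p => ∑ i, Ux i p ^ 2)
        (f' := fun p => ∑ i, 2 * (Ux i p * fderiv ℝ (Ux i) p (1, 0)))
        (continuous_finsetSum _ fun i _ => (cUx i).pow 2)
        (continuous_finsetSum _ fun i _ => continuous_const.mul ((cUx i).mul (cdUx i _)))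
        (fun s x => HasDerivAt.fun_sum fun i _ => ?_) hK
        (fun s hs x hx => Finset.sum_eq_zero fun i _ => by simp [hUx0 i s hs x hx])
        (fun s hs x hx => Finset.sum_eq_zero fun i _ => by simp [hUx0 i s hs x hx]) ht
      refine ((hasDerivAt_slice (hUxd i (s, x))).pow 2).congr_deriv ?_
      norm_num
      ring
    have hparts : ∫ x, ∑ i, 2 * (Ux i (t, x) * fderiv ℝ (Ux i) (t, x) (1, 0))
        = -∫ x, 2 * (Ut (t, x)
          * ∑ i, fderiv ℝ (Ux i) (t, x) (0, EuclideanSpace.single i 1)) := by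
      simp_rw [Finset.mul_sum]
      rw [integral_finsetSum, integral_finsetSum, ← Finset.sum_neg_distrib]
      · refine Finset.sum_congr rfl fun i _ => ?_
        simp_rw [hsymm]
        rw [integral_const_mul, integral_const_mul,
          integral_slice_mul_fderiv (hUxC i) hUtC hK (hUx0 i t ht') (hUt0 t ht'), mul_neg]
      · exact fun i _ => (integrable_slice (f := fun p => Ut p
          * fderiv ℝ (Ux i) p (0, EuclideanSpace.single i 1)) (cUt.mul (cdUx i _)) hK
          fun x hx => by simp [hUt0 t ht' x hx]).const_mul 2
      · exact fun i _ => (integrable_slice (f := fun p => Ux i p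
          * fderiv ℝ (Ux i) p (1, 0)) ((cUx i).mul (cdUx i _)) hK
          fun x hx => by simp [hUx0 i t ht' x hx]).const_mul 2
    have hsum : 2 * ∫ x, Ut (t, x) * g (t, x)
        = (∫ x, 2 * (Ut (t, x) * fderiv ℝ Ut (t, x) (1, 0)))
          - (a t ^ 2)⁻¹ * (∫ x, 2 * (Ut (t, x)
            * ∑ i, fderiv ℝ (Ux i) (t, x) (0, EuclideanSpace.single i 1)))
          + M t ^ 2 * ∫ x, 2 * (Ut (t, x) * U (t, x)) := by
      have i1 : Integrable (fun x => 2 * (Ut (t, x) * fderiv ℝ Ut (t, x) (1, 0))) volume :=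
        (integrable_slice (f := fun p => Ut p * fderiv ℝ Ut p (1, 0)) (cUt.mul (cdUt _)) hK
          fun x hx => by simp [hUt0 t ht' x hx]).const_mul 2
      have i2 : Integrable (fun x => 2 * (Ut (t, x)
          * ∑ i, fderiv ℝ (Ux i) (t, x) (0, EuclideanSpace.single i 1))) volume :=
        (integrable_slice (f := fun p => Ut p
          * ∑ i, fderiv ℝ (Ux i) p (0, EuclideanSpace.single i 1))
          (cUt.mul (continuous_finsetSum _ fun i _ => cdUx i _)) hK
          fun x hx => by simp [hUt0 t ht' x hx]).const_mul 2
      have i3 : Integrable (fun x => 2 * (Ut (t, x) * U (t, x))) volume :=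
        (integrable_slice (f := fun p => Ut p * U p) (cUt.mul cU) hK
          fun x hx => by simp [hUt0 t ht' x hx]).const_mul 2
      rw [← integral_const_mul, ← integral_const_mul, ← integral_const_mul,
        ← integral_sub i1 (i2.const_mul _)]
      refine Eq.trans (integral_congr_ae (Filter.Eventually.of_forall fun x => ?_))
        (integral_add (i1.sub (i2.const_mul _)) (i3.const_mul _))
      simp only [← hpde t ht' x, hUx]
      ring
    have da : HasDerivAt a (deriv a t) t := (ha.differentiable one_ne_zero t).hasDerivAt
    have dM : HasDerivAt M (deriv M t) t := (hM.differentiable one_ne_zero t).hasDerivAt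
    rw [funext hF]
    refine ((dA.add (((da.fun_pow 2).fun_inv (pow_ne_zero 2 (hane t ht'))).mul dB)).add
      ((dM.fun_pow 2).mul dC)).congr_deriv ?_
    rw [hparts, hsum]
    have := hane t ht'
    field_simp
    norm_num
    ring
  · intro t ht
    have h1 : ∫ x, Ut (t, x) * g (t, x) ≤ √(∫ x, Ut (t, x) ^ 2) * √(∫ x, g (t, x) ^ 2) :=
      integral_mul_le_sqrt_mul_sqrt
        (integrable_slice (f := fun p => Ut p ^ 2) (cUt.pow 2) hK
          fun x hx => by simp [hUt0 t ht x hx])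
        (integrable_slice (f := fun p => g p ^ 2) (hg.pow 2) hK
          fun x hx => by simp [hg0 t ht x hx])
        (integrable_slice (f := fun p => Ut p * g p) (cUt.mul hg) hK
          fun x hx => by simp [hg0 t ht x hx])
    have h2 : √(∫ x, Ut (t, x) ^ 2) ≤ √(F t) := by
      refine Real.sqrt_le_sqrt ?_
      have := mul_nonneg (inv_nonneg.2 (sq_nonneg (a t))) (hB0 t)
      have := mul_nonneg (sq_nonneg (M t)) (hC0 t)
      rw [hF]
      linarith
    have h3 := mul_le_mul_of_nonneg_right h2 (Real.sqrt_nonneg (∫ x, g (t, x) ^ 2))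
    have h4 : M t * deriv M t * ∫ x, U (t, x) ^ 2 ≤ 0 :=
      mul_nonpos_of_nonpos_of_nonneg
        (mul_nonpos_of_nonneg_of_nonpos (hM0 t ht.1).le (hM' t ht.1)) (hC0 t)
    linarith
  · intro t ht
    have := mul_nonneg (inv_nonneg.2 (sq_nonneg (a t))) (hB0 t)
    have := mul_nonneg (sq_nonneg (M t)) (hC0 t)
    have := hA0 t
    rw [hF]
    positivity
  · intro t ht
    exact mul_nonneg (mul_nonneg (ha' t ht.1).le
      (inv_nonneg.2 (pow_nonneg (ha0 t ht.1).le 3))) (hB0 t)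
  · exact fun t _ => Real.sqrt_nonneg _

/-- the `X(t)`-norm energy estimate for the linear Klein-Gordon equation
`u_tt - a(t)⁻² Δu + M(t)² u = g`. -/
theorem stmt_8 :
    ∃ C_E : ℝ, 0 < C_E ∧
      ∀ (n : ℕ), 1 ≤ n →
      ∀ (t₀ : ℝ) (a M : ℝ → ℝ),
        ContDiff ℝ 1 a → ContDiff ℝ 1 M →
        (∀ t ∈ Set.Ici t₀, 0 < a t) →
        (∀ t ∈ Set.Ici t₀, 0 < deriv a t) →
        (∀ t ∈ Set.Ici t₀, 0 < M t) →
        (∀ t ∈ Set.Ici t₀, deriv M t ≤ 0) →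
      ∀ g u : ℝ → EuclideanSpace ℝ (Fin n) → ℝ,
        Continuous (fun p : ℝ × EuclideanSpace ℝ (Fin n) => g p.1 p.2) →
        (∀ T : ℝ, ∃ K : Set (EuclideanSpace ℝ (Fin n)), IsCompact K ∧
          ∀ t ∈ Set.Icc t₀ T, ∀ x ∉ K, g t x = 0) →
        ContDiff ℝ 2 (fun p : ℝ × EuclideanSpace ℝ (Fin n) => u p.1 p.2) →
        (∀ T : ℝ, ∃ K : Set (EuclideanSpace ℝ (Fin n)), IsCompact K ∧
          ∀ t ∈ Set.Icc t₀ T, ∀ x ∉ K, u t x = 0) →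
        (∀ t ∈ Set.Ici t₀, ∀ x,
          deriv (fun s => deriv (fun r => u r x) s) t
            - (a t ^ 2)⁻¹ * lap (fun y => u t y) x + (M t) ^ 2 * u t x = g t x) →
      ∀ t : ℝ, t₀ < t →
        Xnorm t₀ t a M u
        ≤ C_E *
          (Real.sqrt (∫ x, (deriv (fun r => u r x) t₀) ^ 2)
            + (a t₀)⁻¹ * Real.sqrt (∫ x, ‖fderiv ℝ (fun y => u t₀ y) x‖ ^ 2)
            + M t₀ * Real.sqrt (∫ x, (u t₀ x) ^ 2)
            + ∫ τ in t₀..t, Real.sqrt (∫ x, (g τ x) ^ 2)) := by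
  refine ⟨8, by norm_num, ?_⟩
  intro n _ t₀ a M ha hM ha0 ha' hM0 hM' g u hg hgK hu huK hpde t ht
  obtain ⟨K₁, hK₁, hu0⟩ := huK t
  obtain ⟨K₂, hK₂, hg0⟩ := hgK t
  set U : ℝ × EuclideanSpace ℝ (Fin n) → ℝ := fun p => u p.1 p.2 with hU
  have hUd : Differentiable ℝ U := hu.differentiable two_ne_zero
  have hut : ∀ s x, deriv (fun r => u r x) s = fderiv ℝ U (s, x) (1, 0) := fun s x =>
    (hasDerivAt_slice (hUd (s, x))).deriv
  have hux : ∀ s x v, fderiv ℝ (fun y => u s y) x v = fderiv ℝ U (s, x) (0, v) := fun s x v =>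
    fderiv_slice (hUd (s, x)) v
  have hgrad : ∀ s x, ‖fderiv ℝ (fun y => u s y) x‖ ^ 2
      = ∑ i, fderiv ℝ U (s, x) (0, EuclideanSpace.single i 1) ^ 2 := fun s x => by
    rw [(EuclideanSpace.basisFun (Fin n) ℝ).norm_dual]
    simp [hux]
  have hutt : ∀ s x, deriv (fun s => fderiv ℝ U (s, x) (1, 0)) s
      = fderiv ℝ (fun p => fderiv ℝ U p (1, 0)) (s, x) (1, 0) := fun s x =>
    (hasDerivAt_slice ((contDiff_fderiv_apply_const hu (1, 0)).differentiable one_ne_zero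
      (s, x))).deriv
  have hlap : ∀ s x, lap (fun y => u s y) x
      = ∑ i, fderiv ℝ (fun p => fderiv ℝ U p (0, EuclideanSpace.single i 1)) (s, x)
          (0, EuclideanSpace.single i 1) := fun s x => by
    refine Finset.sum_congr rfl fun i _ => ?_
    simp_rw [hux]
    exact fderiv_slice ((contDiff_fderiv_apply_const hu
      (0, EuclideanSpace.single i 1)).differentiable one_ne_zero (s, x)) _
  simp_rw [hut, hutt, hlap] at hpde
  obtain ⟨hsup, hint⟩ := energy_estimate ht ha hM ha0 ha' hM0 hM' hu hg (hK₁.union hK₂)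
    (fun s hs x hx => hu0 s hs x fun h => hx (Or.inl h))
    (fun s hs x hx => hg0 s hs x fun h => hx (Or.inr h))
    (fun s hs x => hpde s hs.1 x) (fun s => rfl) (fun s => rfl)
  unfold Xnorm
  simp_rw [integral_const_mul, hut, hgrad]
  set A : ℝ → ℝ := fun s => ∫ x, fderiv ℝ U (s, x) (1, 0) ^ 2
  set B : ℝ → ℝ := fun s => ∫ x, ∑ i, fderiv ℝ U (s, x) (0, EuclideanSpace.single i 1) ^ 2
  set C : ℝ → ℝ := fun s => ∫ x, u s x ^ 2
  set G := ∫ τ in t₀..t, √(∫ x, g τ x ^ 2)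
  have hA0 : ∀ s, 0 ≤ A s := fun s => integral_nonneg fun x => sq_nonneg _
  have hB0 : ∀ s, 0 ≤ B s := fun s =>
    integral_nonneg fun x => Finset.sum_nonneg fun i _ => sq_nonneg _
  have hC0 : ∀ s, 0 ≤ C s := fun s => integral_nonneg fun x => sq_nonneg _
  have hG0 : 0 ≤ G := intervalIntegral.integral_nonneg ht.le fun s _ => Real.sqrt_nonneg _
  set F : ℝ → ℝ := fun s => A s + (a s ^ 2)⁻¹ * B s + M s ^ 2 * C s
  have hBn : ∀ s, 0 ≤ (a s ^ 2)⁻¹ * B s := fun s => mul_nonneg (by positivity) (hB0 s)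
  have hCn : ∀ s, 0 ≤ M s ^ 2 * C s := fun s => mul_nonneg (by positivity) (hC0 s)
  have hBs : ∀ s ∈ Ici t₀, (a s)⁻¹ * √(B s) = √((a s ^ 2)⁻¹ * B s) := fun s hs => by
    rw [Real.sqrt_mul (by positivity), Real.sqrt_inv, Real.sqrt_sq (ha0 s hs).le]
  have hCs : ∀ s ∈ Ici t₀, M s * √(C s) = √(M s ^ 2 * C s) := fun s hs => by
    rw [Real.sqrt_mul (by positivity), Real.sqrt_sq (hM0 s hs).le]
  set R := √(F t₀) + 2 * G
  have hR0 : 0 ≤ R := by positivity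
  have : Nonempty (Icc t₀ t) := ⟨⟨t₀, left_mem_Icc.2 ht.le⟩⟩
  have h1 : ⨆ τ : Icc t₀ t, √(A τ) ≤ R := ciSup_le fun τ =>
    (Real.sqrt_le_sqrt (by linarith [hBn τ, hCn τ])).trans (hsup τ τ.2)
  have h2 : ⨆ τ : Icc t₀ t, (a τ)⁻¹ * √(B τ) ≤ R := ciSup_le fun τ => by
    rw [hBs τ τ.2.1]
    exact (Real.sqrt_le_sqrt (by linarith [hA0 τ, hCn τ])).trans (hsup τ τ.2)
  have h3 : ⨆ τ : Icc t₀ t, M τ * √(C τ) ≤ R := ciSup_le fun τ => by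
    rw [hCs τ τ.2.1]
    exact (Real.sqrt_le_sqrt (by linarith [hA0 τ, hBn τ])).trans (hsup τ τ.2)
  have h4 : √(∫ τ in t₀..t, deriv a τ * (a τ ^ 3)⁻¹ * B τ) ≤ R :=
    (Real.sqrt_le_left hR0).2 hint
  have h5 : √(F t₀) ≤ √(A t₀) + (a t₀)⁻¹ * √(B t₀) + M t₀ * √(C t₀) := by
    rw [hBs t₀ self_mem_Ici, hCs t₀ self_mem_Ici]
    have e1 := Real.sq_sqrt (hA0 t₀)
    have e2 := Real.sq_sqrt (hBn t₀)
    have e3 := Real.sq_sqrt (hCn t₀)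
    have p1 := Real.sqrt_nonneg (A t₀)
    have p2 := Real.sqrt_nonneg ((a t₀ ^ 2)⁻¹ * B t₀)
    have p3 := Real.sqrt_nonneg (M t₀ ^ 2 * C t₀)
    refine (Real.sqrt_le_left (by positivity)).2 ?_
    nlinarith [mul_nonneg p1 p2, mul_nonneg p1 p3, mul_nonneg p2 p3]
  have h6 := Real.sqrt_nonneg (F t₀)
  linarith
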